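/- Let μ be a nonzero finite Borel measure on (0,1) and define ρ_μ(s) = ∫₀¹ s^β dμ(β) for s > 0. Let g : (0,∞) × (0,∞) → [0,∞) be measurable with ∫₀^∞ e^{−st} g(t,τ) dt = e^{−τ ρ_μ(s)} for all s > 0 and all τ > 0. Define G(t,τ) = ∫₀^t g(u,τ) du. Fix s > 0 and τ₀ > 0, and suppose there exist δ > 0 with δ < τ₀ and a measurable function F : (0,∞) → [0,∞) with ∫₀^∞ e^{−st} F(t) dt < ∞ such that for almost every t > 0 the map τ ↦ G(t,τ) is differentiable on (τ₀ − δ, τ₀ + δ) with |∂_τ G(t,τ)| ≤ F(t) there. Then, writing h(t,τ) = −∂_τ G(t,τ), one has ∫₀^∞ e^{−st} h(t,τ₀) dt = (ρ_μ(s)/s) e^{−τ₀ ρ_μ(s)}. -/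

import Mathlib

open MeasureTheory

/-!
For fixed `τ`, the function `t ↦ e^{-st} ∫₀ᵗ g(u, τ) du` is the convolution on the half-line of
`e^{-su} g(u, τ)` with `e^{-su}`, so the Laplace transform of `G(·, τ)` at `s` is
`s⁻¹ e^{-τ ρ(s)}`. The domination hypothesis allows this identity to be differentiated in `τ` under
the integral sign. The function `e^{-st} g(t, τ)` is integrable in `t` because its Bochner integral,
which would be `0` by convention otherwise, is positive.
-/

open Set Filter Topology

section ParametricIntegral

variable {α 𝕜 E : Type*} [MeasurableSpace α] {ν : Measure α} [NormedAddCommGroup E]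

lemma aestronglyMeasurable_of_hasDerivAt [NontriviallyNormedField 𝕜] [NormedSpace 𝕜 E]
    {f : 𝕜 → α → E} {f' : α → E} {x₀ : 𝕜}
    (hf_meas : ∀ᶠ x in 𝓝 x₀, AEStronglyMeasurable (f x) ν)
    (hf : ∀ᵐ a ∂ν, HasDerivAt (f · a) (f' a) x₀) :
    AEStronglyMeasurable f' ν := by
  obtain ⟨x, hx_lim, hx_meas⟩ := exists_seq_forall_of_frequently
    (hf_meas.filter_mono nhdsWithin_le_nhds : ∀ᶠ x in 𝓝[≠] x₀, _).frequently
  refine aestronglyMeasurable_of_tendsto_ae atTop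
    (f := fun n a => slope (f · a) x₀ (x n)) (fun n => ?_) ?_
  · exact ((hx_meas n).sub hf_meas.self_of_nhds).const_smul (x n - x₀)⁻¹
  · filter_upwards [hf] with a ha
    exact (hasDerivAt_iff_tendsto_slope.1 ha).comp hx_lim

lemma hasDerivAt_integral_of_dominated_loc_of_differentiableAt [RCLike 𝕜] [NormedSpace 𝕜 E]
    [NormedSpace ℝ E] {f : 𝕜 → α → E} {x₀ : 𝕜} {U : Set 𝕜} {bound : α → ℝ} (hU : U ∈ 𝓝 x₀)
    (hf_meas : ∀ᶠ x in 𝓝 x₀, AEStronglyMeasurable (f x) ν) (hf_int : Integrable (f x₀) ν)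
    (h_diff : ∀ᵐ a ∂ν, ∀ x ∈ U, DifferentiableAt 𝕜 (f · a) x)
    (h_bound : ∀ᵐ a ∂ν, ∀ x ∈ U, ‖deriv (f · a) x‖ ≤ bound a)
    (bound_integrable : Integrable bound ν) :
    HasDerivAt (fun x => ∫ a, f x a ∂ν) (∫ a, deriv (f · a) x₀ ∂ν) x₀ := by
  have h_deriv : ∀ᵐ a ∂ν, ∀ x ∈ U, HasDerivAt (f · a) (deriv (f · a) x) x :=
    h_diff.mono fun a ha x hx => (ha x hx).hasDerivAt
  have h_deriv_meas : AEStronglyMeasurable (fun a => deriv (f · a) x₀) ν :=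
    aestronglyMeasurable_of_hasDerivAt hf_meas
      (h_deriv.mono fun a ha => ha x₀ (mem_of_mem_nhds hU))
  exact (hasDerivAt_integral_of_dominated_loc_of_deriv_le (F' := fun x a => deriv (f · a) x) hU
    hf_meas hf_int h_deriv_meas h_bound bound_integrable h_deriv).2

end ParametricIntegral

section LaplaceTransform

variable {E : Type*} [NormedAddCommGroup E] [NormedSpace ℝ E]

lemma exp_smul_intervalIntegral_eq_convolution (f : ℝ → E) (s t : ℝ) :
    Real.exp (-s * t) • ∫ u in (0 : ℝ)..t, f u =
      ∫ u in (0 : ℝ)..t, Real.exp (-s * (t - u)) • Real.exp (-s * u) • f u := by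
  rw [← intervalIntegral.integral_smul]
  congr 1 with u
  rw [smul_smul, ← Real.exp_add]
  ring_nf

lemma integrableOn_exp_smul_intervalIntegral {f : ℝ → E} {s : ℝ} (hs : 0 < s)
    (hf : IntegrableOn (fun t => Real.exp (-s * t) • f t) (Ioi 0)) :
    IntegrableOn (fun t => Real.exp (-s * t) • ∫ u in (0 : ℝ)..t, f u) (Ioi 0) := by
  rw [← integrable_indicator_iff measurableSet_Ioi]
  simp_rw [exp_smul_intervalIntegral_eq_convolution]
  exact integrable_posConvolution hf (integrableOn_exp_mul_Ioi (neg_neg_of_pos hs) 0)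
    (ContinuousLinearMap.lsmul ℝ ℝ).flip

lemma integral_exp_smul_intervalIntegral [CompleteSpace E] {f : ℝ → E} {s : ℝ} (hs : 0 < s)
    (hf : IntegrableOn (fun t => Real.exp (-s * t) • f t) (Ioi 0)) :
    ∫ t in Ioi (0 : ℝ), Real.exp (-s * t) • ∫ u in (0 : ℝ)..t, f u =
      s⁻¹ • ∫ t in Ioi (0 : ℝ), Real.exp (-s * t) • f t := by
  have hexp : ∫ t in Ioi (0 : ℝ), Real.exp (-s * t) = s⁻¹ := by
    rw [integral_exp_mul_Ioi (neg_neg_of_pos hs)]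
    simp
  simp_rw [exp_smul_intervalIntegral_eq_convolution]
  rw [← hexp]
  exact integral_posConvolution hf (integrableOn_exp_mul_Ioi (neg_neg_of_pos hs) 0)
    (ContinuousLinearMap.lsmul ℝ ℝ).flip

lemma integral_exp_smul_deriv_intervalIntegral [CompleteSpace E] {g : ℝ → ℝ → E} {Φ' : E}
    {s τ₀ : ℝ} {U : Set ℝ} {F : ℝ → ℝ} (hs : 0 < s) (hU : U ∈ 𝓝 τ₀)
    (hg_int : ∀ τ ∈ U, IntegrableOn (fun t => Real.exp (-s * t) • g t τ) (Ioi 0))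
    (hg_deriv : HasDerivAt (fun τ => ∫ t in Ioi (0 : ℝ), Real.exp (-s * t) • g t τ) Φ' τ₀)
    (hF_int : IntegrableOn (fun t => Real.exp (-s * t) * F t) (Ioi 0))
    (hdom : ∀ᵐ t ∂volume.restrict (Ioi (0 : ℝ)), ∀ τ ∈ U,
      DifferentiableAt ℝ (fun τ' => ∫ u in (0 : ℝ)..t, g u τ') τ ∧
        ‖deriv (fun τ' => ∫ u in (0 : ℝ)..t, g u τ') τ‖ ≤ F t) :
    ∫ t in Ioi (0 : ℝ), Real.exp (-s * t) • deriv (fun τ => ∫ u in (0 : ℝ)..t, g u τ) τ₀ =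
      s⁻¹ • Φ' := by
  have hG_int (τ : ℝ) (hτ : τ ∈ U) := integrableOn_exp_smul_intervalIntegral hs (hg_int τ hτ)
  have h_under_integral : HasDerivAt
      (fun τ => ∫ t in Ioi (0 : ℝ), Real.exp (-s * t) • ∫ u in (0 : ℝ)..t, g u τ)
      (∫ t in Ioi (0 : ℝ), deriv (fun τ => Real.exp (-s * t) • ∫ u in (0 : ℝ)..t, g u τ) τ₀)
      τ₀ := by
    refine hasDerivAt_integral_of_dominated_loc_of_differentiableAt hU
      (eventually_of_mem hU fun τ hτ => (hG_int τ hτ).aestronglyMeasurable)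
      (hG_int τ₀ (mem_of_mem_nhds hU)) ?_ ?_ hF_int
    · filter_upwards [hdom] with t ht τ hτ
      exact (ht τ hτ).1.const_smul _
    · filter_upwards [hdom] with t ht τ hτ
      rw [deriv_fun_const_smul_field, norm_smul, Real.norm_of_nonneg (Real.exp_nonneg _)]
      gcongr
      exact (ht τ hτ).2
  have h_closed_form : HasDerivAt
      (fun τ => ∫ t in Ioi (0 : ℝ), Real.exp (-s * t) • ∫ u in (0 : ℝ)..t, g u τ)
      (s⁻¹ • Φ') τ₀ :=
    (hg_deriv.const_smul s⁻¹).congr_of_eventuallyEq <|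
      eventually_of_mem hU fun τ hτ => integral_exp_smul_intervalIntegral hs (hg_int τ hτ)
  simpa only [deriv_fun_const_smul_field] using h_under_integral.unique h_closed_form

end LaplaceTransform

theorem inverse_mixed_subordinator_density_laplace_general {g : ℝ → ℝ → ℝ} {ρ s τ₀ : ℝ}
    {U : Set ℝ} {F : ℝ → ℝ} (hs : 0 < s) (hU : U ∈ 𝓝 τ₀)
    (hg_lap : ∀ τ ∈ U, ∫ t in Ioi (0 : ℝ), Real.exp (-s * t) * g t τ = Real.exp (-τ * ρ))
    (hF_int : IntegrableOn (fun t => Real.exp (-s * t) * F t) (Ioi 0))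
    (hdom : ∀ᵐ t ∂volume.restrict (Ioi (0 : ℝ)), ∀ τ ∈ U,
      DifferentiableAt ℝ (fun τ' => ∫ u in (0 : ℝ)..t, g u τ') τ ∧
        |deriv (fun τ' => ∫ u in (0 : ℝ)..t, g u τ') τ| ≤ F t) :
    ∫ t in Ioi (0 : ℝ), Real.exp (-s * t) * -deriv (fun τ => ∫ u in (0 : ℝ)..t, g u τ) τ₀ =
      ρ / s * Real.exp (-τ₀ * ρ) := by
  have hg_int (τ : ℝ) (hτ : τ ∈ U) :
      IntegrableOn (fun t => Real.exp (-s * t) * g t τ) (Ioi 0) :=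
    .of_integral_ne_zero (hg_lap τ hτ ▸ (Real.exp_pos _).ne')
  have hexp_deriv :
      HasDerivAt (fun τ => Real.exp (-τ * ρ)) (Real.exp (-τ₀ * ρ) * (-1 * ρ)) τ₀ :=
    ((hasDerivAt_id τ₀).neg.mul_const ρ).exp
  have hg_deriv := hexp_deriv.congr_of_eventuallyEq (eventually_of_mem hU hg_lap)
  have h_laplace_deriv := integral_exp_smul_deriv_intervalIntegral hs hU hg_int hg_deriv hF_int hdom
  simp only [smul_eq_mul] at h_laplace_deriv
  simp only [mul_neg, integral_neg, h_laplace_deriv]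
  ring

/- STATEMENT 6 (identity (8)): the Laplace transform in t of the density
h(t,τ) = -∂_τ ∫₀^t g(u,τ) du of the inverse of a mixed stable subordinator equals
(ρ_μ(s)/s) e^(-τ ρ_μ(s)). -/
theorem inverse_mixed_subordinator_density_laplace (μ : Measure ℝ) [IsFiniteMeasure μ]
    (hμ_ne : μ ≠ 0) (hμ_supp : μ (Set.Ioo (0 : ℝ) 1)ᶜ = 0)
    (ρ : ℝ → ℝ) (hρ : ∀ s : ℝ, 0 < s → ρ s = ∫ b, s ^ b ∂μ)
    (g : ℝ → ℝ → ℝ)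
    (hg_meas : Measurable (Function.uncurry g))
    (hg_nonneg : ∀ t τ : ℝ, 0 < t → 0 < τ → 0 ≤ g t τ)
    (hg_lap : ∀ s : ℝ, 0 < s → ∀ τ : ℝ, 0 < τ →
      ∫ t in Set.Ioi (0 : ℝ), Real.exp (-s * t) * g t τ = Real.exp (-τ * ρ s))
    (G : ℝ → ℝ → ℝ)
    (hG : ∀ t τ : ℝ, G t τ = ∫ u in (0 : ℝ)..t, g u τ)
    (s τ₀ : ℝ) (hs : 0 < s) (hτ₀ : 0 < τ₀)
    (δ : ℝ) (hδ : 0 < δ) (hδτ₀ : δ < τ₀)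
    (F : ℝ → ℝ) (hF_meas : Measurable F) (hF_nonneg : ∀ t : ℝ, 0 ≤ F t)
    (hF_int : IntegrableOn (fun t => Real.exp (-s * t) * F t) (Set.Ioi 0))
    (hdom : ∀ᵐ t ∂(volume.restrict (Set.Ioi (0 : ℝ))),
      ∀ τ ∈ Set.Ioo (τ₀ - δ) (τ₀ + δ),
        DifferentiableAt ℝ (fun τ' => G t τ') τ ∧
          |deriv (fun τ' => G t τ') τ| ≤ F t) :
    ∫ t in Set.Ioi (0 : ℝ), Real.exp (-s * t) * (-(deriv (fun τ' => G t τ') τ₀)) =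
      (ρ s / s) * Real.exp (-τ₀ * ρ s) := by
  obtain rfl : G = fun t τ => ∫ u in (0 : ℝ)..t, g u τ := funext₂ hG
  have hU : Ioo (τ₀ - δ) (τ₀ + δ) ∈ 𝓝 τ₀ := Ioo_mem_nhds (by linarith) (by linarith)
  exact inverse_mixed_subordinator_density_laplace_general hs hU
    (fun τ hτ => hg_lap s hs τ (by linarith [hτ.1])) hF_int hdom
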